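/- arXiv:1009.3464 — 2 statements merged into one kernel-verified Lean document; each statement's English description precedes it below -/
import Mathlib

section
/- Let μ be a computable Borel probability measure on ℝ. Then the topological support of μ contains a computable point. -/
open Filter Topology MeasureTheory

/-- A real number `x` is computable if there is a computable function `f : ℕ → ℚ`
with `|f n - x| < 2^(-n)` for all `n`. -/
def IsComputableReal (x : ℝ) : Prop :=
  ∃ f : ℕ → ℚ, Computable f ∧ ∀ n : ℕ, |(f n : ℝ) - x| < 2 ^ (-(n : ℤ))

/-- A Borel probability measure `μ` on `ℝ` is computable if the measures of finite
unions of open rational intervals are lower-computable reals, uniformly in the list of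
intervals: a single computable function outputs rationals, nondecreasing in `m`,
converging to the measure of the union. -/
def IsComputableMeasureR (μ : Measure ℝ) : Prop :=
  ∃ f : List (ℚ × ℚ) → ℕ → ℚ, Computable₂ f ∧
    ∀ L : List (ℚ × ℚ), Monotone (f L) ∧
      Tendsto (fun m => (f L m : ℝ)) atTop
        (𝓝 (μ (⋃ p ∈ L, Set.Ioo ((p.1 : ℝ)) ((p.2 : ℝ)))).toReal)

open Encodable

/-- The increasing enumeration of an infinite decidable set of naturals is computable. -/
theorem computable_subtype_ofNat {s : Set ℕ} [DecidablePred (· ∈ s)] [Infinite s]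
    (hs : ComputablePred fun n => n ∈ s) :
    Computable fun n => (Nat.Subtype.ofNat s n : ℕ) := by
  have hex (x : ℕ) : ∃ m, x + m + 1 ∈ s := by
    obtain ⟨y, hy, hxy⟩ := (Set.infinite_coe_iff.mp ‹Infinite s›).exists_gt x
    exact ⟨y - x - 1, by rwa [show x + (y - x - 1) + 1 = y by omega]⟩
  have hfind : Computable fun x => Nat.find (hex x) :=
    Computable.find (P := fun x m => x + m + 1 ∈ s)
      (hs.decide.comp (g := fun p : ℕ × ℕ => p.1 + p.2 + 1)
        (Computable.succ.comp Primrec.nat_add.to_comp)).computablePred hex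
  have hnext : Computable fun x => x + Nat.find (hex x) + 1 :=
    Computable.succ.comp (Primrec.nat_add.to_comp.comp Computable.id hfind)
  refine (Computable.nat_rec (h := fun _ p => p.2 + Nat.find (hex p.2) + 1)
    Computable.id (Computable.const ((⊥ : s) : ℕ))
    (hnext.comp (Computable.snd.comp Computable.snd)).to₂).of_eq fun n => ?_
  induction n with
  | zero => rfl
  | succ n ih =>
    simp only [id] at ih ⊢
    rw [ih]
    rfl

theorem encode_ofNat_ofEncodableOfInfinite (α : Type*) [Encodable α] [Infinite α] (n : ℕ)
    [Infinite (Set.range (encode : α → ℕ))] :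
    letI := decidableRangeEncode α
    encode (@Denumerable.ofNat α (Denumerable.ofEncodableOfInfinite α) n) =
      (Nat.Subtype.ofNat (Set.range (encode : α → ℕ)) n : ℕ) := by
  let := decidableRangeEncode α
  let := Nat.Subtype.denumerable (Set.range (@encode α _))
  have h1 : @Denumerable.ofNat α (Denumerable.ofEncodableOfInfinite α) n =
    (equivRangeEncode α).symm (Denumerable.ofNat (Set.range (encode : α → ℕ)) n) :=
    Denumerable.ofEquiv_ofNat _ _ _
  have h2 : Denumerable.ofNat (Set.range (encode : α → ℕ)) n = Nat.Subtype.ofNat _ n :=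
    Denumerable.ofEquiv_ofNat _ _ _
  rw [h1, h2]
  exact congrArg Subtype.val ((equivRangeEncode α).apply_symm_apply _)

theorem Rat.encode_eq (q : ℚ) :
   @encode ℚ Rat.instEncodable q = Nat.pair (encode q.num) q.den := rfl

theorem Int.encode_eq (z : ℤ) :
   encode z = if 0 ≤ z then 2 * z.toNat else 2 * ((-z).toNat - 1) + 1 := by
  obtain n | n := z
  · change Equiv.natSumNatEquivNat (.inl n) = _
    simp
  · change Equiv.natSumNatEquivNat (.inr n) = _
    simp [Int.negSucc_not_nonneg]

theorem Int.toNat_eq_of_encode (z : ℤ) :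
    z.toNat = if encode z % 2 = 0 then encode z / 2 else 0 := by
  rw [Int.encode_eq]
  split_ifs <;> omega

theorem Int.toNat_neg_eq_of_encode (z : ℤ) :
    (-z).toNat = if encode z % 2 = 0 then 0 else encode z / 2 + 1 := by
  rw [Int.encode_eq]
  split_ifs <;> omega

theorem primrec_int_toNat : Primrec Int.toNat :=
  (Primrec.ite (Primrec.eq.comp (Primrec.nat_mod.comp Primrec.encode (.const 2)) (.const 0))
    (Primrec.nat_div.comp Primrec.encode (.const 2)) (.const 0)).of_eq
    fun z => (Int.toNat_eq_of_encode z).symm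

theorem primrec_int_toNat_neg : Primrec fun z : ℤ => (-z).toNat :=
  (Primrec.ite (Primrec.eq.comp (Primrec.nat_mod.comp Primrec.encode (.const 2)) (.const 0))
    (.const 0) (Primrec.succ.comp (Primrec.nat_div.comp Primrec.encode (.const 2)))).of_eq
    fun z => (Int.toNat_neg_eq_of_encode z).symm

theorem primrec_int_natAbs : Primrec Int.natAbs :=
  (Primrec.nat_add.comp primrec_int_toNat primrec_int_toNat_neg).of_eq fun z => by omega

theorem Nat.coprime_iff_forall_lt {a b : ℕ} (hb : 0 < b) :
    a.Coprime b ↔ ∀ d < b + 1, ¬(a % d = 0 ∧ b % d = 0) ∨ d = 1 := by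
  constructor
  · intro h d _
    by_cases hd : a % d = 0 ∧ b % d = 0
    · exact .inr (Nat.eq_one_of_dvd_coprimes h (Nat.dvd_of_mod_eq_zero hd.1)
        (Nat.dvd_of_mod_eq_zero hd.2))
    · exact .inl hd
  · intro h
    have := h (a.gcd b) (Nat.lt_succ_of_le (Nat.gcd_le_right a hb))
    simpa [Nat.mod_eq_zero_of_dvd (Nat.gcd_dvd_left a b),
      Nat.mod_eq_zero_of_dvd (Nat.gcd_dvd_right a b)] using this

theorem primrecRel_pos_and_coprime : PrimrecRel fun a b : ℕ => 0 < b ∧ a.Coprime b := by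
  have hmod : PrimrecRel fun (d : ℕ) (p : ℕ × ℕ) => ¬(p.1 % d = 0 ∧ p.2 % d = 0) ∨ d = 1 :=
    (((Primrec.eq.comp (Primrec.nat_mod.comp (Primrec.fst.comp Primrec.snd) Primrec.fst)
      (.const 0)).and (Primrec.eq.comp
        (Primrec.nat_mod.comp (Primrec.snd.comp Primrec.snd) Primrec.fst) (.const 0))).not).or
      (Primrec.eq.comp Primrec.fst (.const 1))
  refine PrimrecPred.of_eq ((Primrec.nat_lt.comp (.const 0) Primrec.snd).and
    (hmod.forall_mem_list.comp
      (Primrec.list_range.comp (Primrec.succ.comp Primrec.snd)) Primrec.id)) fun p => ?_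
  refine and_congr_right fun hp => ?_
  simp only [List.mem_range]
  exact (Nat.coprime_iff_forall_lt hp).symm

theorem Rat.mem_range_encode_iff (n : ℕ) :
    n ∈ Set.range (@encode ℚ Rat.instEncodable) ↔
      0 < n.unpair.2 ∧ (Denumerable.ofNat ℤ n.unpair.1).natAbs.Coprime n.unpair.2 := by
  constructor
  · rintro ⟨q, rfl⟩
    rw [Rat.encode_eq, Nat.unpair_pair, Denumerable.ofNat_encode]
    exact ⟨q.pos, q.reduced⟩
  · rintro ⟨hpos, hco⟩
    refine ⟨⟨Denumerable.ofNat ℤ n.unpair.1, n.unpair.2, hpos.ne', hco⟩, ?_⟩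
    rw [Rat.encode_eq, Denumerable.encode_ofNat, Nat.pair_unpair]

/-- The encoding of a rational as a pair (numerator, denominator) is computable with respect to
the `Denumerable` numbering of `ℚ`. -/
theorem computable_rat_encode : Computable (@encode ℚ Rat.instEncodable) := by
  have : Infinite (Set.range (@encode ℚ Rat.instEncodable)) :=
    (Set.infinite_range_of_injective encode_injective).to_subtype
  let := decidableRangeEncode ℚ
  have hmem : ComputablePred fun n => n ∈ Set.range (@encode ℚ Rat.instEncodable) :=
    ((primrecRel_pos_and_coprime.comp
      (primrec_int_natAbs.comp ((Primrec.ofNat ℤ).comp (Primrec.fst.comp Primrec.unpair)))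
      (Primrec.snd.comp Primrec.unpair)).of_eq
      fun n => (Rat.mem_range_encode_iff n).symm).computablePred
  refine ((computable_subtype_ofNat hmem).comp
    (Computable.encode (α := ℚ))).of_eq fun q => ?_
  refine (encode_ofNat_ofEncodableOfInfinite ℚ _).symm.trans ?_
  exact congrArg _ (Denumerable.ofNat_encode q)

theorem computable_rat_num : Computable Rat.num :=
  ((Computable.ofNat ℤ).comp
    (Computable.fst.comp (Computable.unpair.comp computable_rat_encode))).of_eq fun q => by
    rw [Rat.encode_eq, Nat.unpair_pair, Denumerable.ofNat_encode]

theorem computable_rat_den : Computable Rat.den :=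
  (Computable.snd.comp (Computable.unpair.comp computable_rat_encode)).of_eq fun q => by
    simp [Rat.encode_eq]

theorem Rat.lt_iff_nat (q r : ℚ) :
    q < r ↔ q.num.toNat * r.den + (-r.num).toNat * q.den <
      r.num.toNat * q.den + (-q.num).toNat * r.den := by
  rw [Rat.lt_iff]
  nth_rw 1 [← Int.toNat_sub_toNat_neg q.num, ← Int.toNat_sub_toNat_neg r.num]
  zify
  constructor <;> intro h <;> linarith

theorem Rat.two_pow_mul_sub_lt_one_iff (n : ℕ) (q r : ℚ) :
    2 ^ n * (r - q) < 1 ↔ 2 ^ n * (r.num.toNat * q.den + (-q.num).toNat * r.den) <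
      q.den * r.den + 2 ^ n * (q.num.toNat * r.den + (-r.num).toNat * q.den) := by
  have hq : (0 : ℚ) < q.den := by exact_mod_cast q.pos
  have hr : (0 : ℚ) < r.den := by exact_mod_cast r.pos
  have key (s : ℚ) : s * s.den = s.num.toNat - (-s.num).toNat := by
    rw [Rat.mul_den_eq_num]
    exact_mod_cast (Int.toNat_sub_toNat_neg s.num).symm
  have h : 2 ^ n * (r - q) * (q.den * r.den) =
      2 ^ n * ((r.num.toNat - (-r.num).toNat) * q.den - (q.num.toNat - (-q.num).toNat) * r.den) := by
    rw [← key, ← key]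
    ring
  rw [← mul_lt_mul_iff_left₀ (mul_pos hq hr), h, one_mul, ← Nat.cast_lt (α := ℚ)]
  push_cast
  constructor <;> intro h <;> linarith

theorem computable_rat_num_toNat : Computable fun q : ℚ => q.num.toNat :=
  primrec_int_toNat.to_comp.comp computable_rat_num

theorem computable_rat_num_toNat_neg : Computable fun q : ℚ => (-q.num).toNat :=
  primrec_int_toNat_neg.to_comp.comp computable_rat_num

section

variable {α : Type*} [Primcodable α]

theorem Computable.nat_add {f g : α → ℕ} (hf : Computable f) (hg : Computable g) :
    Computable fun a => f a + g a :=
  Primrec.nat_add.to_comp.comp hf hg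

theorem Computable.nat_mul {f g : α → ℕ} (hf : Computable f) (hg : Computable g) :
    Computable fun a => f a * g a :=
  Primrec.nat_mul.to_comp.comp hf hg

theorem Computable.two_pow {f : α → ℕ} (hf : Computable f) : Computable fun a => 2 ^ f a :=
  ((Computable.nat_rec Computable.id (Computable.const 1)
    (Computable.nat_mul (Computable.snd.comp Computable.snd) (Computable.const 2)).to₂).of_eq
      fun n : ℕ => by
        induction n with
        | zero => rfl
        | succ n ih => simp only [id] at ih ⊢; rw [ih, pow_succ]).comp hf

theorem ComputablePred.and {p q : α → Prop} (hp : ComputablePred p) (hq : ComputablePred q) :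
    ComputablePred fun a => p a ∧ q a := by
  classical
  exact ((Primrec.and.to_comp.comp hp.decide hq.decide).of_eq fun a => by simp).computablePred

theorem ComputablePred.nat_lt {f g : α → ℕ} (hf : Computable f) (hg : Computable g) :
    ComputablePred fun a => f a < g a :=
  (Primrec.nat_lt.decide.to_comp.comp hf hg).computablePred

theorem ComputablePred.rat_lt {f g : α → ℚ} (hf : Computable f) (hg : Computable g) :
    ComputablePred fun a => f a < g a := by
  have num {f : α → ℚ} (hf : Computable f) := computable_rat_num_toNat.comp hf
  have neg {f : α → ℚ} (hf : Computable f) := computable_rat_num_toNat_neg.comp hf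
  have den {f : α → ℚ} (hf : Computable f) := computable_rat_den.comp hf
  exact (ComputablePred.nat_lt (((num hf).nat_mul (den hg)).nat_add ((neg hg).nat_mul (den hf)))
    (((num hg).nat_mul (den hf)).nat_add ((neg hf).nat_mul (den hg)))).of_eq
      fun a => (Rat.lt_iff_nat _ _).symm

theorem ComputablePred.two_pow_mul_rat_sub_lt_one {k : α → ℕ} {f g : α → ℚ} (hk : Computable k)
    (hf : Computable f) (hg : Computable g) :
    ComputablePred fun a => 2 ^ k a * (g a - f a) < 1 := by
  have num {f : α → ℚ} (hf : Computable f) := computable_rat_num_toNat.comp hf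
  have neg {f : α → ℚ} (hf : Computable f) := computable_rat_num_toNat_neg.comp hf
  have den {f : α → ℚ} (hf : Computable f) := computable_rat_den.comp hf
  exact (ComputablePred.nat_lt
    (hk.two_pow.nat_mul (((num hg).nat_mul (den hf)).nat_add ((neg hf).nat_mul (den hg))))
    (((den hf).nat_mul (den hg)).nat_add
      (hk.two_pow.nat_mul (((num hf).nat_mul (den hg)).nat_add ((neg hg).nat_mul (den hf)))))).of_eq
      fun a => (Rat.two_pow_mul_sub_lt_one_iff _ _ _).symm

end

/-- Effective dependent choice: if every good point has a successor for a decidable relation `R`,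
and such successors are good, then an `R`-chain of good points can be computed. -/
theorem exists_computable_seq {σ : Type*} [Primcodable σ] {good : σ → Prop}
    {R : ℕ → σ → σ → Prop} (hR : ComputablePred fun p : (ℕ × σ) × σ => R p.1.1 p.1.2 p.2)
    (hex : ∀ n s, good s → ∃ t, R n s t) (hgood : ∀ n s t, R n s t → good t)
    {s₀ : σ} (hs₀ : good s₀) :
    ∃ g : ℕ → σ, Computable g ∧ ∀ n, good (g n) ∧ R n (g n) (g (n + 1)) := by
  classical
  let search (p : ℕ × σ) (k : ℕ) : Option σ :=
    (decode (α := σ) k).bind fun t => bif decide (R p.1 p.2 t) then some t else none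
  have hsearch : Computable₂ search :=
    Computable.option_bind (Computable.decode.comp Computable.snd)
      (Computable.cond (hR.decide.comp
          ((Computable.fst.comp Computable.fst).pair Computable.snd))
        (Computable.option_some.comp Computable.snd) (Computable.const none)).to₂
  let step (p : ℕ × σ) : Part σ := Nat.rfindOpt (search p)
  have hstep : Partrec step := Partrec.rfindOpt hsearch
  have step_dom {n s} (hs : good s) : ∃ t, t ∈ step (n, s) := by
    obtain ⟨t, ht⟩ := hex n s hs
    refine Part.dom_iff_mem.1 (Nat.rfindOpt_dom.2 ⟨encode t, t, ?_⟩)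
    simp [search, ht]
  have step_spec {n s t} (ht : t ∈ step (n, s)) : R n s t := by
    obtain ⟨k, hk⟩ := Nat.rfindOpt_spec ht
    simp only [search, Option.mem_def, Option.bind_eq_some_iff] at hk
    obtain ⟨u, -, hu⟩ := hk
    by_cases h : R n s u <;> simp_all
  choose! next hnext using fun n s => @step_dom n s
  let g (n : ℕ) : σ := Nat.rec s₀ (fun n s => next n s) n
  have g_good (n : ℕ) : good (g n) := by
    induction n with
    | zero => exact hs₀
    | succ n ih => exact hgood _ _ _ (step_spec (hnext n _ ih))
  refine ⟨g, ?_, fun n => ⟨g_good n, step_spec (hnext n _ (g_good n))⟩⟩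
  refine Partrec.of_eq_tot (Partrec.nat_rec (h := fun _ p => step p) Computable.id
    (Computable.const s₀).partrec (hstep.comp Computable.snd).to₂) fun n => ?_
  induction n with
  | zero => exact Part.mem_some _
  | succ n ih => exact Part.mem_bind_iff.2 ⟨g n, ih, hnext n _ (g_good n)⟩

/-- An open set of positive measure contains arbitrarily short closed rational intervals whose
interiors have positive measure. -/
theorem exists_Ioo_measure_pos {μ : Measure ℝ} {U : Set ℝ} (hU : IsOpen U) (hμ : 0 < μ U)
    {ε : ℚ} (hε : 0 < ε) :
    ∃ c d : ℚ, Set.Icc (c : ℝ) d ⊆ U ∧ d - c < ε ∧ 0 < μ (Set.Ioo (c : ℝ) d) := by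
  by_contra! h
  refine hμ.ne' (measure_mono_null (t := ⋃ p : {p : ℚ × ℚ // Set.Icc (p.1 : ℝ) p.2 ⊆ U ∧
    p.2 - p.1 < ε}, Set.Ioo (p.1.1 : ℝ) p.1.2) ?_ (measure_iUnion_null fun p =>
      nonpos_iff_eq_zero.1 (h _ _ p.2.1 p.2.2)))
  intro x hx
  obtain ⟨δ, hδ, hball⟩ := Metric.isOpen_iff.1 hU x hx
  have hε' : (0 : ℝ) < ε := by exact_mod_cast hε
  have hr : 0 < min δ (ε / 2) := by positivity
  obtain ⟨c, hc, hcx⟩ := exists_rat_btwn (sub_lt_self x hr)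
  obtain ⟨d, hxd, hd⟩ := exists_rat_btwn (lt_add_of_pos_right x hr)
  have h1 := min_le_left δ (ε / 2 : ℝ)
  have h2 := min_le_right δ (ε / 2 : ℝ)
  refine Set.mem_iUnion.2 ⟨⟨(c, d), fun y hy => hball ?_, ?_⟩, hcx, hxd⟩
  · rw [Real.ball_eq_Ioo]
    exact ⟨by linarith [hy.1], by linarith [hy.2]⟩
  · have : (d : ℝ) - c < ε := by linarith
    exact_mod_cast this

/-- The support of a computable Borel probability measure on `ℝ` (the smallest closed
set of full measure) contains a computable point. -/
theorem computableMeasure_support_contains_computable_point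
    (μ : Measure ℝ) [IsProbabilityMeasure μ] (hμ : IsComputableMeasureR μ) :
    ∃ x : ℝ, IsComputableReal x ∧
      ∀ C : Set ℝ, IsClosed C → μ C = 1 → x ∈ C := by
  obtain ⟨f, hf, hfμ⟩ := hμ
  have hlim (c d : ℚ) : Tendsto (fun m => (f [(c, d)] m : ℝ)) atTop
      (𝓝 (μ (Set.Ioo (c : ℝ) d)).toReal) := by
    simpa using (hfμ [(c, d)]).2
  have pos_of_approx {c d : ℚ} {m : ℕ} (h : 0 < f [(c, d)] m) : 0 < μ (Set.Ioo (c : ℝ) d) := by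
    have hmono : Monotone fun m => (f [(c, d)] m : ℝ) :=
      Rat.cast_mono.comp (hfμ [(c, d)]).1
    have : 0 < (μ (Set.Ioo (c : ℝ) d)).toReal :=
      lt_of_lt_of_le (by exact_mod_cast h) (hmono.ge_of_tendsto (hlim c d) m)
    exact (ENNReal.toReal_pos_iff.1 this).1
  have approx_of_pos {c d : ℚ} (h : 0 < μ (Set.Ioo (c : ℝ) d)) : ∃ m, 0 < f [(c, d)] m := by
    have := ((hlim c d).eventually_const_lt
      (ENNReal.toReal_pos h.ne' (measure_ne_top _ _))).exists
    exact_mod_cast this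
  let R (n : ℕ) (s t : (ℚ × ℚ) × ℕ) : Prop :=
    s.1.1 < t.1.1 ∧ t.1.2 < s.1.2 ∧ 2 ^ n * (t.1.2 - t.1.1) < 1 ∧ 0 < f [t.1] t.2
  have hR : ComputablePred fun p : (ℕ × (ℚ × ℚ) × ℕ) × (ℚ × ℚ) × ℕ => R p.1.1 p.1.2 p.2 := by
    have hs : Computable fun p : (ℕ × (ℚ × ℚ) × ℕ) × (ℚ × ℚ) × ℕ => p.1.2.1 :=
      Computable.fst.comp (Computable.snd.comp Computable.fst)
    have ht : Computable fun p : (ℕ × (ℚ × ℚ) × ℕ) × (ℚ × ℚ) × ℕ => p.2.1 :=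
      Computable.fst.comp Computable.snd
    exact (ComputablePred.rat_lt (Computable.fst.comp hs) (Computable.fst.comp ht)).and <|
      (ComputablePred.rat_lt (Computable.snd.comp ht) (Computable.snd.comp hs)).and <|
      (ComputablePred.two_pow_mul_rat_sub_lt_one (Computable.fst.comp Computable.fst)
        (Computable.fst.comp ht) (Computable.snd.comp ht)).and <|
      ComputablePred.rat_lt (Computable.const 0)
        (hf.comp (Computable.list_cons.comp ht (Computable.const []))
          (Computable.snd.comp Computable.snd))
  have hex (n : ℕ) (s : (ℚ × ℚ) × ℕ) (hs : 0 < μ (Set.Ioo (s.1.1 : ℝ) s.1.2)) :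
      ∃ t, R n s t := by
    obtain ⟨c, d, hsub, hlen, hpos⟩ :=
      exists_Ioo_measure_pos isOpen_Ioo hs (ε := (2 ^ n)⁻¹) (by positivity)
    obtain ⟨m, hm⟩ := approx_of_pos hpos
    have hcd : (c : ℝ) < d := Set.nonempty_Ioo.1 (nonempty_of_measure_ne_zero hpos.ne')
    have hc := (hsub (Set.left_mem_Icc.2 hcd.le)).1
    have hd := (hsub (Set.right_mem_Icc.2 hcd.le)).2
    refine ⟨((c, d), m), by exact_mod_cast hc, by exact_mod_cast hd, ?_, hm⟩
    rwa [mul_comm, ← lt_inv_mul_iff₀' (by positivity), mul_one]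
  obtain ⟨a, b, -, -, hab⟩ := exists_Ioo_measure_pos (μ := μ) isOpen_univ
    (by simp) one_pos
  obtain ⟨g, hg, hgR⟩ := exists_computable_seq (s₀ := ((a, b), 0)) hR hex
    (fun n s t h => pos_of_approx h.2.2.2) hab
  have hmono : Monotone fun n => ((g n).1.1 : ℝ) :=
    monotone_nat_of_le_succ fun n => by exact_mod_cast (hgR n).2.1.le
  have hanti : Antitone fun n => ((g n).1.2 : ℝ) :=
    antitone_nat_of_succ_le fun n => by exact_mod_cast (hgR n).2.2.1.le
  have hle (n : ℕ) : ((g n).1.1 : ℝ) ≤ (g n).1.2 :=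
    (Set.nonempty_Ioo.1 (nonempty_of_measure_ne_zero (hgR n).1.ne')).le
  have hlen (n : ℕ) : ((g (n + 1)).1.2 : ℝ) - (g (n + 1)).1.1 < 2 ^ (-(n : ℤ)) := by
    have h : (2 : ℝ) ^ n * ((g (n + 1)).1.2 - (g (n + 1)).1.1) < 1 := by
      exact_mod_cast (hgR n).2.2.2.1
    rw [zpow_neg, zpow_natCast, ← one_div, lt_div_iff₀' (by positivity)]
    exact h
  have hx := Set.mem_iInter.1 (hmono.ciSup_mem_iInter_Icc_of_antitone hanti hle)
  set x : ℝ := ⨆ n, ((g n).1.1 : ℝ)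
  refine ⟨x, ⟨fun n => (g (n + 1)).1.1, Computable.fst.comp (Computable.fst.comp
    (hg.comp Computable.succ)), fun n => ?_⟩, fun C hC hC1 => ?_⟩
  · rw [abs_sub_lt_iff]
    have := hlen n
    constructor <;> linarith [(hx (n + 1)).1, (hx (n + 1)).2,
      zpow_pos (two_pos : (0 : ℝ) < 2) (-(n : ℤ))]
  · by_contra hxC
    obtain ⟨ε, hε, hball⟩ := Metric.isOpen_iff.1 hC.isOpen_compl x hxC
    obtain ⟨n, hn⟩ := exists_pow_lt_of_lt_one hε (by norm_num : (2⁻¹ : ℝ) < 1)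
    have hn' : (2 : ℝ) ^ (-(n : ℤ)) < ε := by rwa [zpow_neg, zpow_natCast, ← inv_pow]
    refine (hgR (n + 1)).1.ne' (measure_mono_null (fun y hy => hball ?_)
      ((prob_compl_eq_zero_iff hC.measurableSet).2 hC1))
    have := hlen n
    have := hx (n + 1)
    rw [Real.ball_eq_Ioo]
    exact ⟨by linarith [hy.1, this.2], by linarith [hy.2, this.1]⟩
end

section
/- There exists a computable, nondecreasing, continuous function t : [0,1] → ℝ with t(1) = t(0) + 1 such that the induced circle endomorphism T₁ : ℝ/ℤ → ℝ/ℤ, T₁(x) = t(x) mod ℤ, has the property that every T₁-invariant Borel probability measure on ℝ/ℤ is not computable. -/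
open Filter Topology MeasureTheory

/-- A function `t : [0,1] → ℝ` is computable if its values at rationals in `[0,1]` can
be computably approximated, and it has a computable modulus of continuity. -/
def IsComputableFunOnUnitInterval (t : ℝ → ℝ) : Prop :=
  (∃ F : ℚ → ℕ → ℚ, Computable₂ F ∧
    ∀ q : ℚ, (q : ℝ) ∈ Set.Icc (0 : ℝ) 1 →
      ∀ n : ℕ, |(F q n : ℝ) - t (q : ℝ)| < 2 ^ (-(n : ℤ))) ∧
  (∃ m : ℕ → ℕ, Computable m ∧
    ∀ x ∈ Set.Icc (0 : ℝ) 1, ∀ y ∈ Set.Icc (0 : ℝ) 1, ∀ n : ℕ,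
      |x - y| ≤ 2 ^ (-(m n : ℤ)) → |t x - t y| ≤ 2 ^ (-(n : ℤ)))

/-- The open arc of the circle `ℝ/ℤ` with rational endpoints `a < b`. -/
def circleArc (a b : ℚ) : Set (AddCircle (1 : ℝ)) :=
  (fun x : ℝ => (x : AddCircle (1 : ℝ))) '' Set.Ioo ((a : ℝ)) ((b : ℝ))

/-- A Borel probability measure `μ` on the circle `ℝ/ℤ` is computable if the measures
of finite unions of open rational arcs are lower-computable reals, uniformly in the
list of arcs. -/
def IsComputableMeasureCircle (μ : Measure (AddCircle (1 : ℝ))) : Prop :=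
  ∃ f : List (ℚ × ℚ) → ℕ → ℚ, Computable₂ f ∧
    ∀ L : List (ℚ × ℚ), Monotone (f L) ∧
      Tendsto (fun m => (f L m : ℝ)) atTop
        (𝓝 (μ (⋃ p ∈ L, circleArc p.1 p.2)).toReal)

theorem Computable.natFind {α : Type*} [Primcodable α] {p : α → ℕ → Prop}
    [∀ a, DecidablePred (p a)] (hp : Computable₂ fun a n => decide (p a n))
    (h : ∀ a, ∃ n, p a n) : Computable fun a => Nat.find (h a) := by
  refine Partrec.of_eq_tot (Partrec.rfind hp.partrec₂) fun a => ?_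
  rw [Nat.mem_rfind]
  refine ⟨?_, fun {m} hm => ?_⟩
  · simpa using Nat.find_spec (h a)
  · simpa using Nat.find_min (h a) hm

theorem Computable.of_strictMono {c : ℕ → ℕ} (hc : StrictMono c)
    (hr : PrimrecPred fun n => n ∈ Set.range c) : Computable c := by
  classical
  have hex : ∀ y, ∃ z, y < z ∧ z ∈ Set.range c := fun y =>
    ⟨c (y + 1), (Nat.lt_succ_self y).trans_le hc.le_apply, y + 1, rfl⟩
  have hdec : PrimrecRel fun y z : ℕ => y < z ∧ z ∈ Set.range c :=
    (Primrec.nat_lt.comp Primrec.fst Primrec.snd).and (hr.comp Primrec.snd)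
  have hnext := Computable.natFind hdec.decide.to_comp hex
  refine (Computable.nat_rec Computable.id (Computable.const (c 0))
    (hnext.comp (Computable.snd.comp Computable.snd)).to₂).of_eq fun n => ?_
  induction n with
  | zero => rfl
  | succ n ih =>
    simp only [id] at ih ⊢
    rw [ih, Nat.find_eq_iff]
    refine ⟨⟨hc n.lt_succ_self, n + 1, rfl⟩, ?_⟩
    rintro m hm ⟨h1, k, rfl⟩
    have := hc.lt_iff_lt.1 hm
    have := hc.lt_iff_lt.1 h1
    omega

theorem Denumerable.strictMono_encode_ofNat_ofEncodableOfInfinite (α : Type*)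
    [e : Encodable α] [Infinite α] :
    StrictMono fun n => e.encode (@Denumerable.ofNat α (Denumerable.ofEncodableOfInfinite α) n) := by
  let := @Encodable.decidableRangeEncode α _
  let : Infinite (Set.range (@Encodable.encode α _)) :=
    Infinite.of_injective _ (Equiv.ofInjective _ Encodable.encode_injective).injective
  have key : ∀ n, e.encode (@Denumerable.ofNat α (Denumerable.ofEncodableOfInfinite α) n) =
      (Nat.Subtype.ofNat (Set.range (@Encodable.encode α _)) n : ℕ) := fun n => by
    have h := (Encodable.equivRangeEncode α).apply_symm_apply
      (Nat.Subtype.ofNat (Set.range (@Encodable.encode α _)) n)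
    exact congrArg Subtype.val h
  refine strictMono_nat_of_lt_succ fun n => ?_
  rw [key, key]
  exact Nat.Subtype.lt_succ_self _

namespace Rat

/-- Mathlib's underlying encoding of a rational number by its numerator and denominator. -/
def rawCode (q : ℚ) : ℕ := Nat.pair (Encodable.encode q.num) q.den

theorem strictMono_rawCode_ofNat : StrictMono fun n => rawCode (Denumerable.ofNat ℚ n) :=
  @Denumerable.strictMono_encode_ofNat_ofEncodableOfInfinite ℚ Rat.instEncodable _

end Rat

theorem Int.natAbs_eq_encode_div (z : ℤ) : z.natAbs = (Encodable.encode z + 1) / 2 := by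
  cases z with
  | ofNat n =>
    have : Encodable.encode (Int.ofNat n) = 2 * n := rfl
    rw [this]; simp only [Int.natAbs]; omega
  | negSucc n =>
    have : Encodable.encode (Int.negSucc n) = 2 * n + 1 := rfl
    rw [this]; simp only [Int.natAbs]; omega

theorem Int.pos_iff_encode (z : ℤ) :
    0 < z ↔ 0 < Encodable.encode z ∧ Encodable.encode z % 2 = 0 := by
  cases z with
  | ofNat n =>
    have : Encodable.encode (Int.ofNat n) = 2 * n := rfl
    rw [this]; simp
  | negSucc n =>
    have : Encodable.encode (Int.negSucc n) = 2 * n + 1 := rfl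
    rw [this]; simp

theorem Primrec.natPow {α : Type*} [Primcodable α] (b : ℕ) {f : α → ℕ} (hf : Primrec f) :
    Primrec fun a => b ^ f a := by
  have : Primrec fun n : ℕ => b ^ n :=
    (Primrec.nat_rec₁ 1 (f := fun _ y => y * b)
      (Primrec.nat_mul.comp Primrec.snd (Primrec.const b)).to₂).of_eq fun n => by
        induction n with
        | zero => rfl
        | succ n ih => simp [pow_succ, ← ih]
  exact this.comp hf

theorem PrimrecRel.natCoprime : PrimrecRel Nat.Coprime := by
  have hd : PrimrecRel fun (p : ℕ × ℕ) (d : ℕ) => p.1 % d = 0 ∧ p.2 % d = 0 :=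
    (Primrec.eq.comp (Primrec.nat_mod.comp (Primrec.fst.comp Primrec.fst) Primrec.snd)
      (Primrec.const 0)).and
    (Primrec.eq.comp (Primrec.nat_mod.comp (Primrec.snd.comp Primrec.fst) Primrec.snd)
      (Primrec.const 0))
  have hg : Primrec fun p : ℕ × ℕ => Nat.gcd p.1 p.2 := by
    refine (Primrec.nat_findGreatest (f := fun p : ℕ × ℕ => p.1 + p.2)
      (Primrec.nat_add.comp Primrec.fst Primrec.snd) hd).of_eq fun p => ?_
    rw [Nat.findGreatest_eq_iff]
    refine ⟨?_, fun _ => ⟨Nat.mod_eq_zero_of_dvd (Nat.gcd_dvd_left _ _),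
      Nat.mod_eq_zero_of_dvd (Nat.gcd_dvd_right _ _)⟩, ?_⟩
    · rcases Nat.eq_zero_or_pos p.1 with h | h
      · simp [h]
      · exact (Nat.gcd_le_left _ h).trans (Nat.le_add_right _ _)
    · rintro n hn hn' ⟨h1, h2⟩
      have := Nat.dvd_gcd (Nat.dvd_of_mod_eq_zero h1) (Nat.dvd_of_mod_eq_zero h2)
      rcases Nat.eq_zero_or_pos (p.1.gcd p.2) with h | h
      · rw [Nat.gcd_eq_zero_iff] at h
        omega
      · exact absurd (Nat.le_of_dvd h this) (by omega)
  exact Primrec.eq.comp hg (Primrec.const 1)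

namespace Rat

theorem mem_range_rawCode (z : ℕ) :
    z ∈ Set.range rawCode ↔ 0 < z.unpair.2 ∧ Nat.Coprime ((z.unpair.1 + 1) / 2) z.unpair.2 := by
  constructor
  · rintro ⟨q, rfl⟩
    simp only [rawCode, Nat.unpair_pair]
    rw [← Int.natAbs_eq_encode_div]
    exact ⟨q.pos, q.reduced⟩
  · rintro ⟨h1, h2⟩
    obtain ⟨i, hi⟩ : ∃ i : ℤ, Encodable.encode i = z.unpair.1 :=
      ⟨Denumerable.ofNat ℤ z.unpair.1, Denumerable.encode_ofNat (α := ℤ) _⟩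
    rw [← hi, ← Int.natAbs_eq_encode_div] at h2
    refine ⟨⟨i, z.unpair.2, h1.ne', h2⟩, ?_⟩
    simp [rawCode, hi]

theorem computable_rawCode : Computable rawCode := by
  have hc : Computable fun n => rawCode (Denumerable.ofNat ℚ n) := by
    refine Computable.of_strictMono strictMono_rawCode_ofNat ?_
    have h : PrimrecPred fun z : ℕ =>
        0 < z.unpair.2 ∧ Nat.Coprime ((z.unpair.1 + 1) / 2) z.unpair.2 :=
      (Primrec.nat_lt.comp (Primrec.const 0) (Primrec.snd.comp Primrec.unpair)).and
      (PrimrecRel.natCoprime.comp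
        (Primrec.nat_div.comp (Primrec.succ.comp (Primrec.fst.comp Primrec.unpair))
          (Primrec.const 2)) (Primrec.snd.comp Primrec.unpair))
    refine h.of_eq fun z => ?_
    rw [← mem_range_rawCode]
    constructor
    · rintro ⟨q, rfl⟩
      exact ⟨_, congrArg rawCode (Denumerable.ofNat_encode q)⟩
    · rintro ⟨n, rfl⟩
      exact ⟨_, rfl⟩
  exact (hc.comp Computable.encode).of_eq fun q => congrArg rawCode (Denumerable.ofNat_encode q)

theorem computable_den : Computable Rat.den :=
  (Primrec.snd.comp Primrec.unpair).to_comp.comp computable_rawCode |>.of_eq fun q => by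
    simp [rawCode]

theorem computable_num_natAbs : Computable fun q : ℚ => q.num.natAbs :=
  (Primrec.nat_div.comp (Primrec.succ.comp (Primrec.fst.comp Primrec.unpair))
    (Primrec.const 2)).to_comp.comp computable_rawCode |>.of_eq fun q => by
    simp [rawCode, Int.natAbs_eq_encode_div]

theorem computable_decide_pos : Computable fun q : ℚ => decide (0 < q) := by
  have h : PrimrecPred fun z : ℕ => 0 < z.unpair.1 ∧ z.unpair.1 % 2 = 0 :=
    (Primrec.nat_lt.comp (Primrec.const 0) (Primrec.fst.comp Primrec.unpair)).and
    (Primrec.eq.comp (Primrec.nat_mod.comp (Primrec.fst.comp Primrec.unpair) (Primrec.const 2))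
      (Primrec.const 0))
  refine (h.decide.to_comp.comp computable_rawCode).of_eq fun q => ?_
  simp only [rawCode, Nat.unpair_pair, ← Int.pos_iff_encode, Rat.num_pos]

theorem eq_natCast_div_iff_rawCode (q : ℚ) (a b : ℕ) :
    q = (a : ℚ) / (b + 1 : ℕ) ↔ q.rawCode.unpair.1 % 2 = 0 ∧
      q.rawCode.unpair.1 * (b + 1) = 2 * a * q.rawCode.unpair.2 := by
  have key : q = (a : ℚ) / (b + 1 : ℕ) ↔ q.num * (b + 1) = a * q.den := by
    rw [eq_div_iff (by positivity)]
    conv_lhs => rw [← Rat.num_div_den q]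
    rw [div_mul_eq_mul_div, div_eq_iff (by exact_mod_cast q.den_nz)]
    norm_cast
  rw [key]
  simp only [rawCode, Nat.unpair_pair]
  cases hq : q.num with
  | ofNat n =>
    have : Encodable.encode (Int.ofNat n) = 2 * n := rfl
    rw [this]
    simp only [Int.ofNat_eq_natCast, Nat.mul_mod_right, true_and]
    norm_cast
    rw [mul_assoc, mul_assoc]
    omega
  | negSucc n =>
    have : Encodable.encode (Int.negSucc n) = 2 * n + 1 := rfl
    rw [this]
    constructor
    · intro h
      have h1 : Int.negSucc n * ((b : ℤ) + 1) < 0 :=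
        mul_neg_of_neg_of_pos (Int.negSucc_lt_zero n) (by positivity)
      have h2 : (0 : ℤ) ≤ a * q.den := by positivity
      omega
    · rintro ⟨h, -⟩
      omega

theorem computable_natCast_div_succ : Computable₂ fun a b : ℕ => ((a : ℚ) / (b + 1 : ℕ)) := by
  have hp : PrimrecRel fun (p : ℕ × ℕ) (z : ℕ) =>
      z.unpair.1 % 2 = 0 ∧ z.unpair.1 * (p.2 + 1) = 2 * p.1 * z.unpair.2 := by
    have hz : Primrec fun p : (ℕ × ℕ) × ℕ => p.2.unpair := Primrec.unpair.comp Primrec.snd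
    refine PrimrecPred.and (Primrec.eq.comp (Primrec.nat_mod.comp (Primrec.fst.comp hz)
      (Primrec.const 2)) (Primrec.const 0)) (Primrec.eq.comp ?_ ?_)
    · exact Primrec.nat_mul.comp (Primrec.fst.comp hz)
        (Primrec.succ.comp (Primrec.snd.comp Primrec.fst))
    · exact Primrec.nat_mul.comp
        (Primrec.nat_mul.comp (Primrec.const 2) (Primrec.fst.comp Primrec.fst))
        (Primrec.snd.comp hz)
  have hp' : Computable₂ fun (p : ℕ × ℕ) (n : ℕ) =>
      decide (Denumerable.ofNat ℚ n = (p.1 : ℚ) / (p.2 + 1 : ℕ)) := by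
    refine (Computable₂.comp hp.decide.to_comp Computable.fst
      (computable_rawCode.comp ((Computable.ofNat ℚ).comp Computable.snd))).of_eq fun x => ?_
    exact decide_eq_decide.2 (eq_natCast_div_iff_rawCode _ _ _).symm
  have hex : ∀ p : ℕ × ℕ, ∃ n, Denumerable.ofNat ℚ n = (p.1 : ℚ) / (p.2 + 1 : ℕ) := fun p =>
    ⟨_, Denumerable.ofNat_encode _⟩
  have hf := Computable.natFind hp' hex
  refine Computable.of_eq ((Computable.ofNat ℚ).comp hf) fun p => ?_
  exact Nat.find_spec (hex p)

end Rat

namespace CircleBumps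

/-- The reciprocal of the half-width of the `s`-th tent. -/
def scale (s : ℕ) : ℕ := 2 ^ (s.unpair.1 + 4)

/-- The centre of the `s`-th tent, in units of `1 / scale s`: if `s = ⟨n, k⟩`, it is read off
from the output of the `n`-th program on input `n` after at most `k` steps. -/
def center (s : ℕ) : ℕ :=
  min ((Nat.Partrec.Code.evaln s.unpair.2
    (Denumerable.ofNat Nat.Partrec.Code s.unpair.1) s.unpair.1).getD 0) (scale s - 2) + 1

/-- The `s`-th tent function. -/
noncomputable def tent (s : ℕ) (x : ℝ) : ℝ := max 0 (1 - |scale s * x - center s|)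

/-- A function positive near the endpoints of the unit interval. -/
noncomputable def edge (x : ℝ) : ℝ := max 0 (1 - 8 * x) + max 0 (8 * x - 7)

/-- The displacement `t x - x` of the circle map. -/
noncomputable def displacement (x : ℝ) : ℝ :=
  (edge x + ∑' s, (1 / 4) ^ s * tent s x) / 64

theorem sixteen_le_scale (s : ℕ) : 16 ≤ scale s := by
  have : 1 ≤ 2 ^ s.unpair.1 := Nat.one_le_two_pow
  rw [scale, pow_add]; omega

theorem one_le_center (s : ℕ) : 1 ≤ center s := Nat.le_add_left _ _

theorem center_lt_scale (s : ℕ) : center s + 1 ≤ scale s := by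
  have := sixteen_le_scale s
  have := min_le_right ((Nat.Partrec.Code.evaln s.unpair.2
    (Denumerable.ofNat Nat.Partrec.Code s.unpair.1) s.unpair.1).getD 0) (scale s - 2)
  rw [center]; omega

theorem tent_nonneg (s : ℕ) (x : ℝ) : 0 ≤ tent s x := le_max_left _ _

theorem tent_le_one (s : ℕ) (x : ℝ) : tent s x ≤ 1 :=
  max_le zero_le_one (by linarith [abs_nonneg (scale s * x - center s : ℝ)])

theorem tent_pos_iff (s : ℕ) (x : ℝ) :
    0 < tent s x ↔ |(scale s : ℝ) * x - center s| < 1 := by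
  rw [tent, lt_max_iff]; simp

theorem tent_zero (s : ℕ) : tent s 0 = 0 := by
  have : (1 : ℝ) ≤ center s := by exact_mod_cast one_le_center s
  rw [tent, max_eq_left]
  rw [mul_zero, zero_sub, abs_neg, abs_of_nonneg] <;> linarith

theorem tent_one (s : ℕ) : tent s 1 = 0 := by
  have : (center s : ℝ) + 1 ≤ scale s := by exact_mod_cast center_lt_scale s
  rw [tent, max_eq_left]
  rw [mul_one, abs_of_nonneg] <;> linarith

theorem abs_max_zero_sub_le (a b : ℝ) : |max 0 a - max 0 b| ≤ |a - b| := by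
  simpa using abs_max_sub_max_le_abs a b 0 |> fun h => by simpa [max_comm] using h

theorem abs_tent_sub_le (s : ℕ) (x y : ℝ) : |tent s x - tent s y| ≤ scale s * |x - y| := by
  refine (abs_max_zero_sub_le _ _).trans ?_
  have h := abs_abs_sub_abs_le (scale s * y - center s : ℝ) (scale s * x - center s)
  have e : (scale s * y - center s : ℝ) - (scale s * x - center s) = scale s * (y - x) := by ring
  rw [e, abs_mul, abs_sub_comm y x, Nat.abs_cast] at h
  rwa [show 1 - |(scale s : ℝ) * x - center s| - (1 - |scale s * y - center s|) =
    |scale s * y - center s| - |scale s * x - center s| by ring]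

theorem abs_edge_sub_le (x y : ℝ) : |edge x - edge y| ≤ 16 * |x - y| := by
  have h1 := abs_max_zero_sub_le (1 - 8 * x) (1 - 8 * y)
  have h2 := abs_max_zero_sub_le (8 * x - 7) (8 * y - 7)
  have e1 : |(1 - 8 * x) - (1 - 8 * y)| = 8 * |x - y| := by
    rw [show (1 - 8 * x) - (1 - 8 * y) = -(8 * (x - y)) by ring, abs_neg, abs_mul]; norm_num
  have e2 : |(8 * x - 7) - (8 * y - 7)| = 8 * |x - y| := by
    rw [show (8 * x - 7) - (8 * y - 7) = 8 * (x - y) by ring, abs_mul]; norm_num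
  have := abs_add_le (max 0 (1 - 8 * x) - max 0 (1 - 8 * y)) (max 0 (8 * x - 7) - max 0 (8 * y - 7))
  rw [show edge x - edge y = (max 0 (1 - 8 * x) - max 0 (1 - 8 * y)) +
    (max 0 (8 * x - 7) - max 0 (8 * y - 7)) by simp only [edge]; ring]
  linarith

theorem summable_tent (x : ℝ) : Summable fun s => (1 / 4 : ℝ) ^ s * tent s x :=
  Summable.of_nonneg_of_le (fun s => mul_nonneg (by positivity) (tent_nonneg s x))
    (fun s => mul_le_of_le_one_right (by positivity) (tent_le_one s x))
    (summable_geometric_of_lt_one (by norm_num) (by norm_num))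

theorem edge_nonneg (x : ℝ) : 0 ≤ edge x := add_nonneg (le_max_left _ _) (le_max_left _ _)

theorem displacement_nonneg (x : ℝ) : 0 ≤ displacement x :=
  div_nonneg (add_nonneg (edge_nonneg x)
    (tsum_nonneg fun s => mul_nonneg (by positivity) (tent_nonneg s x))) (by norm_num)

theorem displacement_pos_of_tent {s : ℕ} {x : ℝ} (h : 0 < tent s x) : 0 < displacement x :=
  div_pos (add_pos_of_nonneg_of_pos (edge_nonneg x)
    ((summable_tent x).tsum_pos (fun s => mul_nonneg (by positivity) (tent_nonneg s x)) s
      (by positivity))) (by norm_num)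

theorem displacement_eq_zero {x : ℝ} (h : edge x = 0) (h' : ∀ s, tent s x = 0) :
    displacement x = 0 := by
  simp [displacement, h, h']

theorem displacement_zero : displacement 0 = 1 / 64 := by
  simp [displacement, tent_zero, edge]

theorem displacement_one : displacement 1 = 1 / 64 := by
  norm_num [displacement, tent_one, edge]

theorem abs_displacement_sub_le (x y : ℝ) :
    |displacement x - displacement y| ≤ 3 / 4 * |x - y| := by
  have hterm (s : ℕ) : |(1 / 4 : ℝ) ^ s * tent s x - (1 / 4) ^ s * tent s y| ≤
      (1 / 2) ^ s * (16 * |x - y|) := by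
    rw [← mul_sub, abs_mul, abs_of_nonneg (by positivity)]
    have hs : (scale s : ℝ) ≤ 2 ^ s * 16 := by
      have : scale s ≤ 2 ^ s * 16 := by
        rw [scale, pow_add]
        exact Nat.mul_le_mul (Nat.pow_le_pow_right two_pos (Nat.unpair_left_le s)) le_rfl
      exact_mod_cast this
    calc (1 / 4 : ℝ) ^ s * |tent s x - tent s y|
        ≤ (1 / 4) ^ s * (2 ^ s * 16 * |x - y|) := by
          have := (abs_tent_sub_le s x y).trans
            (mul_le_mul_of_nonneg_right hs (abs_nonneg (x - y)))
          gcongr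
      _ = (1 / 4 * 2) ^ s * (16 * |x - y|) := by rw [mul_pow]; ring
      _ = _ := by norm_num
  have hsum : HasSum (fun s : ℕ => (1 / 2 : ℝ) ^ s * (16 * |x - y|)) (2 * (16 * |x - y|)) :=
    hasSum_geometric_two.mul_right _
  have hle := tsum_of_norm_bounded hsum
    (f := fun s => (1 / 4 : ℝ) ^ s * tent s x - (1 / 4) ^ s * tent s y) hterm
  rw [(summable_tent x).tsum_sub (summable_tent y), Real.norm_eq_abs] at hle
  have he := abs_edge_sub_le x y
  rw [displacement, displacement, ← sub_div, abs_div, abs_of_pos (by norm_num : (0 : ℝ) < 64),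
    div_le_iff₀ (by norm_num)]
  rw [abs_le] at hle he ⊢
  constructor <;> linarith [hle.1, hle.2, he.1, he.2]

theorem continuous_displacement : Continuous displacement :=
  (LipschitzWith.of_dist_le_mul (K := 3 / 4) fun x y => by
    simpa [Real.dist_eq] using abs_displacement_sub_le x y).continuous

theorem exists_displacement_eq_zero : ∃ p ∈ Set.Icc (1 / 8 : ℝ) (7 / 8), displacement p = 0 := by
  have hj (n : ℕ) : ∃ j : ℕ, ∀ k, k.unpair.1 = n → center k = 1 ∨ center k = j := by
    by_cases h : ∃ v, v ∈ Nat.Partrec.Code.eval (Denumerable.ofNat Nat.Partrec.Code n) n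
    · obtain ⟨v, hv⟩ := h
      refine ⟨min v (2 ^ (n + 4) - 2) + 1, ?_⟩
      rintro k rfl
      rw [center, scale]
      cases e : Nat.Partrec.Code.evaln k.unpair.2
        (Denumerable.ofNat Nat.Partrec.Code k.unpair.1) k.unpair.1 with
      | none => simp
      | some w =>
        have := Part.mem_unique hv (Nat.Partrec.Code.evaln_sound (Option.mem_def.2 e))
        simp [this]
    · refine ⟨0, ?_⟩
      rintro k rfl
      rw [center, scale]
      cases e : Nat.Partrec.Code.evaln k.unpair.2
        (Denumerable.ofNat Nat.Partrec.Code k.unpair.1) k.unpair.1 with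
      | none => simp
      | some w => exact absurd ⟨w, Nat.Partrec.Code.evaln_sound (Option.mem_def.2 e)⟩ h
  choose j hj using hj
  let E (n : ℕ) : Set ℝ := Metric.ball (j n / 2 ^ (n + 4)) (1 / 2 ^ (n + 4))
  have hE (n : ℕ) : volume (E n) = ENNReal.ofReal ((1 / 8) * (1 / 2) ^ n) := by
    rw [Real.volume_ball]
    congr 1
    rw [pow_add, one_div_pow]
    field_simp
    norm_num
  have hU : volume (⋃ n, E n) ≤ ENNReal.ofReal (1 / 4) := by
    refine (measure_iUnion_le _).trans_eq ?_
    simp_rw [hE]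
    rw [← ENNReal.ofReal_tsum_of_nonneg (fun n => by positivity)
      (summable_geometric_two.mul_left _), tsum_mul_left, tsum_geometric_two]
    norm_num
  have hne : ¬ Set.Icc (1 / 8 : ℝ) (7 / 8) ⊆ ⋃ n, E n := fun hsub => by
    have := (measure_mono hsub).trans hU
    rw [Real.volume_Icc, ENNReal.ofReal_le_ofReal_iff (by norm_num)] at this
    norm_num at this
  obtain ⟨p, hp, hpE⟩ := Set.not_subset.1 hne
  refine ⟨p, hp, displacement_eq_zero ?_ fun s => ?_⟩
  · rw [edge, max_eq_left (by linarith [hp.1]), max_eq_left (by linarith [hp.2]), add_zero]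
  · by_contra hne
    have h := (tent_pos_iff s p).1 (lt_of_le_of_ne (tent_nonneg s p) (Ne.symm hne))
    have hs : (16 : ℝ) ≤ scale s := by exact_mod_cast sixteen_le_scale s
    rcases hj _ s rfl with hc | hc
    · rw [hc, abs_lt] at h
      have := mul_le_mul hs hp.1 (by norm_num) (by linarith)
      norm_num at this h
      linarith
    · apply hpE
      rw [Set.mem_iUnion]
      refine ⟨s.unpair.1, ?_⟩
      rw [Metric.mem_ball, Real.dist_eq, ← hc]
      have e : (2 : ℝ) ^ (s.unpair.1 + 4) = scale s := by simp [scale]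
      rw [e, show p - (center s : ℝ) / scale s = (scale s * p - center s) / scale s by
        field_simp, abs_div, Nat.abs_cast]
      gcongr

theorem primrec_scale : Primrec scale :=
  Primrec.natPow 2 (Primrec.nat_add.comp (Primrec.fst.comp Primrec.unpair) (Primrec.const 4))

theorem primrec_center : Primrec center := by
  have h1 : Primrec fun s : ℕ => s.unpair.1 := Primrec.fst.comp Primrec.unpair
  have h2 : Primrec fun s : ℕ => s.unpair.2 := Primrec.snd.comp Primrec.unpair
  have he : Primrec fun s : ℕ => Nat.Partrec.Code.evaln s.unpair.2
      (Denumerable.ofNat Nat.Partrec.Code s.unpair.1) s.unpair.1 :=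
    Nat.Partrec.Code.primrec_evaln.comp ((h2.pair ((Primrec.ofNat _).comp h1)).pair h1)
  exact Primrec.succ.comp (Primrec.nat_min.comp (Primrec.option_getD.comp he (Primrec.const 0))
    (Primrec.nat_sub.comp primrec_scale (Primrec.const 2)))

/-- The numerator of `tent s (a / d)` over the denominator `d`. -/
def tentNum (a d s : ℕ) : ℕ :=
  d - ((a * scale s - center s * d) + (center s * d - a * scale s))

theorem tent_natCast_div {a d : ℕ} (hd : 0 < d) (s : ℕ) :
    tent s (a / d : ℝ) = tentNum a d s / d := by
  have hd' : (0 : ℝ) < d := by exact_mod_cast hd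
  have e : |(scale s : ℝ) * (a / d) - center s| =
      ((a * scale s - center s * d) + (center s * d - a * scale s) : ℕ) / d := by
    rw [show (scale s : ℝ) * (a / d) - center s = (a * scale s - center s * d) / d by
      field_simp, abs_div, Nat.abs_cast]
    congr 1
    rcases le_total (a * scale s) (center s * d) with h | h
    · have h' : (a * scale s : ℝ) ≤ center s * d := by exact_mod_cast h
      rw [Nat.sub_eq_zero_of_le h, abs_of_nonpos (by linarith), zero_add, Nat.cast_sub h]
      push_cast; ring
    · have h' : (center s * d : ℝ) ≤ a * scale s := by exact_mod_cast h
      rw [Nat.sub_eq_zero_of_le h, abs_of_nonneg (by linarith), add_zero, Nat.cast_sub h]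
      push_cast; ring
  rw [tent, e, tentNum]
  set m := (a * scale s - center s * d) + (center s * d - a * scale s)
  rcases le_total m d with h | h
  · have h' : (m : ℝ) ≤ d := by exact_mod_cast h
    rw [Nat.cast_sub h, sub_div, div_self hd'.ne', max_eq_right]
    rw [sub_nonneg, div_le_one hd']; exact h'
  · have h' : (d : ℝ) ≤ m := by exact_mod_cast h
    rw [Nat.sub_eq_zero_of_le h, max_eq_left]
    · simp
    · rw [sub_nonpos, one_le_div hd']; exact h'

theorem primrec_tentNum : Primrec fun p : (ℕ × ℕ) × ℕ => tentNum p.1.1 p.1.2 p.2 := by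
  have ha : Primrec fun p : (ℕ × ℕ) × ℕ => p.1.1 * scale p.2 :=
    Primrec.nat_mul.comp (Primrec.fst.comp Primrec.fst) (primrec_scale.comp Primrec.snd)
  have hc : Primrec fun p : (ℕ × ℕ) × ℕ => center p.2 * p.1.2 :=
    Primrec.nat_mul.comp (primrec_center.comp Primrec.snd) (Primrec.snd.comp Primrec.fst)
  exact Primrec.nat_sub.comp (Primrec.snd.comp Primrec.fst)
    (Primrec.nat_add.comp (Primrec.nat_sub.comp ha hc) (Primrec.nat_sub.comp hc ha))

/-- The numerator of the `n`-th partial sum at `a / d` over the denominator `4 ^ n * d`. -/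
def tentSum (a d n : ℕ) : ℕ :=
  Nat.rec 0 (fun s y => 4 * (y + tentNum a d s)) n

theorem sum_tent_natCast_div {a d : ℕ} (hd : 0 < d) (n : ℕ) :
    ∑ s ∈ Finset.range n, (1 / 4 : ℝ) ^ s * tent s (a / d) = tentSum a d n / (4 ^ n * d) := by
  have hd' : (d : ℝ) ≠ 0 := by exact_mod_cast hd.ne'
  induction n with
  | zero => simp [tentSum]
  | succ n ih =>
    have : tentSum a d (n + 1) = 4 * (tentSum a d n + tentNum a d n) := rfl
    rw [Finset.sum_range_succ, ih, tent_natCast_div hd, this, one_div_pow]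
    push_cast
    field_simp
    ring

theorem primrec_tentSum : Primrec fun p : (ℕ × ℕ) × ℕ => tentSum p.1.1 p.1.2 p.2 := by
  refine Primrec.nat_rec' (h := fun (p : (ℕ × ℕ) × ℕ) (q : ℕ × ℕ) =>
    4 * (q.2 + tentNum p.1.1 p.1.2 q.1)) Primrec.snd (Primrec.const 0) ?_
  exact Primrec.nat_mul.comp (Primrec.const 4) (Primrec.nat_add.comp
    (Primrec.snd.comp Primrec.snd) (primrec_tentNum.comp
      ((Primrec.fst.comp Primrec.fst).pair (Primrec.fst.comp Primrec.snd))))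

/-- The numerator of the `n`-th approximation of `t (a / d)` over `64 * 4 ^ n * d`. -/
def approxNum (a d n : ℕ) : ℕ :=
  4 ^ n * (64 * a + ((d - 8 * a) + (8 * a - 7 * d))) + tentSum a d n

theorem primrec_approxNum : Primrec fun p : (ℕ × ℕ) × ℕ => approxNum p.1.1 p.1.2 p.2 := by
  have ha : Primrec fun p : (ℕ × ℕ) × ℕ => p.1.1 := Primrec.fst.comp Primrec.fst
  have hd : Primrec fun p : (ℕ × ℕ) × ℕ => p.1.2 := Primrec.snd.comp Primrec.fst
  have h8 : Primrec fun p : (ℕ × ℕ) × ℕ => 8 * p.1.1 := Primrec.nat_mul.comp (Primrec.const 8) ha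
  exact Primrec.nat_add.comp (Primrec.nat_mul.comp (Primrec.natPow 4 Primrec.snd)
    (Primrec.nat_add.comp (Primrec.nat_mul.comp (Primrec.const 64) ha)
      (Primrec.nat_add.comp (Primrec.nat_sub.comp hd h8)
        (Primrec.nat_sub.comp h8 (Primrec.nat_mul.comp (Primrec.const 7) hd))))) primrec_tentSum

theorem edge_natCast_div {a d : ℕ} (hd : 0 < d) :
    edge (a / d) = ((d - 8 * a) + (8 * a - 7 * d) : ℕ) / d := by
  have hd' : (0 : ℝ) < d := by exact_mod_cast hd
  rw [edge, Nat.cast_add, add_div]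
  congr 1
  · rw [show 1 - 8 * (a / d : ℝ) = (d - 8 * a) / d by field_simp]
    rcases le_total (8 * a) d with h | h
    · rw [Nat.cast_sub h, max_eq_right]
      · push_cast; rfl
      · have : (8 * a : ℝ) ≤ d := by exact_mod_cast h
        exact div_nonneg (by linarith) hd'.le
    · have : (d : ℝ) ≤ 8 * a := by exact_mod_cast h
      rw [Nat.sub_eq_zero_of_le h, max_eq_left]
      · simp
      · exact div_nonpos_of_nonpos_of_nonneg (by linarith) hd'.le
  · rw [show 8 * (a / d : ℝ) - 7 = (8 * a - 7 * d) / d by field_simp]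
    rcases le_total (7 * d) (8 * a) with h | h
    · rw [Nat.cast_sub h, max_eq_right]
      · push_cast; rfl
      · have : (7 * d : ℝ) ≤ 8 * a := by exact_mod_cast h
        exact div_nonneg (by linarith) hd'.le
    · have : (8 * a : ℝ) ≤ 7 * d := by exact_mod_cast h
      rw [Nat.sub_eq_zero_of_le h, max_eq_left]
      · simp
      · exact div_nonpos_of_nonpos_of_nonneg (by linarith) hd'.le

theorem abs_approx_sub_lt {a d : ℕ} (hd : 0 < d) (n : ℕ) :
    |(approxNum a d n : ℝ) / (64 * 4 ^ n * d) - (a / d + displacement (a / d))| <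
      2 ^ (-(n : ℤ)) := by
  have hd' : (d : ℝ) ≠ 0 := by exact_mod_cast hd.ne'
  have htail := (summable_tent (a / d)).sum_add_tsum_nat_add n
  have hs : Summable fun i => (1 / 4 : ℝ) ^ (i + n) * tent (i + n) (a / d) :=
    (summable_nat_add_iff n).2 (summable_tent (a / d))
  set R := ∑' i, (1 / 4 : ℝ) ^ (i + n) * tent (i + n) (a / d) with hR
  have hR0 : 0 ≤ R := tsum_nonneg fun s => mul_nonneg (by positivity) (tent_nonneg _ _)
  have hR1 : R ≤ 4 / 3 * (1 / 4) ^ n := by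
    have hg : HasSum (fun i : ℕ => (1 / 4 : ℝ) ^ i * (1 / 4) ^ n) ((1 - 1 / 4)⁻¹ * (1 / 4) ^ n) :=
      (hasSum_geometric_of_lt_one (by norm_num) (by norm_num)).mul_right _
    refine (hs.tsum_le_tsum (fun i => ?_) hg.summable).trans ?_
    · rw [pow_add]
      exact mul_le_of_le_one_right (by positivity) (tent_le_one _ _)
    · rw [hg.tsum_eq]; norm_num
  have e : (approxNum a d n : ℝ) / (64 * 4 ^ n * d) - (a / d + displacement (a / d)) =
      - (R / 64) := by
    rw [displacement, ← htail, sum_tent_natCast_div hd, edge_natCast_div hd, approxNum]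
    push_cast
    field_simp
    ring
  rw [e, abs_neg, abs_of_nonneg (by positivity), zpow_neg, zpow_natCast, ← inv_pow]
  have h1 : (1 / 4 : ℝ) ^ n ≤ 2⁻¹ ^ n := by gcongr; norm_num
  have h2 : (0 : ℝ) < 2⁻¹ ^ n := by positivity
  linarith

/-- The common denominator of the approximations, minus one. -/
def approxDenPred (d n : ℕ) : ℕ := 64 * 4 ^ n * d - 1

theorem primrec_approxDenPred : Primrec₂ approxDenPred :=
  Primrec.pred.comp (Primrec.nat_mul.comp
    (Primrec.nat_mul.comp (Primrec.const 64) (Primrec.natPow 4 Primrec.snd)) Primrec.fst)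

theorem approxDenPred_add_one {d : ℕ} (hd : 0 < d) (n : ℕ) :
    approxDenPred d n + 1 = 64 * 4 ^ n * d :=
  Nat.sub_add_cancel (Nat.succ_le_of_lt (Nat.mul_pos (by positivity) hd))

/-- The `n`-th rational approximation of the circle map at `q`. -/
def approx (q : ℚ) (n : ℕ) : ℚ :=
  (approxNum q.num.natAbs q.den n : ℚ) / (approxDenPred q.den n + 1 : ℕ)


theorem computable_div_of_primrec {f : ℕ → ℕ → ℕ → ℕ} {g : ℕ → ℕ → ℕ}
    (hf : Primrec fun p : (ℕ × ℕ) × ℕ => f p.1.1 p.1.2 p.2) (hg : Primrec₂ g) :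
    Computable₂ fun (q : ℚ) (n : ℕ) =>
      (f q.num.natAbs q.den n : ℚ) / (g q.den n + 1 : ℕ) := by
  have hd : Computable fun p : ℚ × ℕ => p.1.den := Rat.computable_den.comp Computable.fst
  have ha : Computable fun p : ℚ × ℕ => p.1.num.natAbs :=
    Rat.computable_num_natAbs.comp Computable.fst
  exact Rat.computable_natCast_div_succ.comp
    (hf.to_comp.comp ((ha.pair hd).pair Computable.snd)) (hg.to_comp.comp hd Computable.snd)

theorem computable_approx : Computable₂ approx :=
  computable_div_of_primrec primrec_approxNum primrec_approxDenPred

theorem isComputableFunOnUnitInterval_displacement :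
    IsComputableFunOnUnitInterval fun x => x + displacement x := by
  refine ⟨⟨approx, computable_approx, ?_⟩, fun n => n + 1, Primrec.succ.to_comp, ?_⟩
  · intro q hq n
    have h0 : 0 ≤ q := by exact_mod_cast hq.1
    have hqe : (q : ℝ) = q.num.natAbs / q.den := by
      conv_lhs => rw [← Rat.num_div_den q]
      have : (q.num : ℝ) = q.num.natAbs := by
        have h : (q.num.natAbs : ℤ) = q.num := Int.natAbs_of_nonneg (Rat.num_nonneg.2 h0)
        rw [← Int.cast_natCast, h]
      rw [Rat.cast_div, Rat.cast_intCast, Rat.cast_natCast, this]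
    rw [approx, approxDenPred_add_one q.pos, hqe]
    push_cast
    exact abs_approx_sub_lt q.pos n
  · intro x _ y _ n h
    have hd := abs_displacement_sub_le x y
    have h2 : (2 : ℝ) ^ (-(n : ℤ)) = 2 * 2 ^ (-((n + 1 : ℕ) : ℤ)) := by
      rw [show -(n : ℤ) = 1 + -((n + 1 : ℕ) : ℤ) by push_cast; ring, zpow_add₀ two_ne_zero,
        zpow_one]
    have := abs_add_le (x - y) (displacement x - displacement y)
    rw [show x + displacement x - (y + displacement y) =
      (x - y) + (displacement x - displacement y) by ring, h2]
    linarith [abs_nonneg (x - y)]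

end CircleBumps

namespace AddCircle

/-- The representative in `[0, 1)` of a point of the circle. -/
noncomputable def rep (y : AddCircle (1 : ℝ)) : ℝ := equivIco 1 0 y

theorem coe_rep (y : AddCircle (1 : ℝ)) : (rep y : AddCircle (1 : ℝ)) = y := coe_equivIco

theorem rep_mem (y : AddCircle (1 : ℝ)) : rep y ∈ Set.Ico (0 : ℝ) 1 := by
  simpa [rep] using (equivIco 1 (0 : ℝ) y).2

theorem rep_coe {x : ℝ} (hx : x ∈ Set.Ico (0 : ℝ) 1) : rep (x : AddCircle (1 : ℝ)) = x :=
  equivIco_coe_of_mem (by simpa using hx)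

theorem rep_coe_of_mem_Ico_one_two {x : ℝ} (hx : x ∈ Set.Ico (1 : ℝ) 2) :
    rep (x : AddCircle (1 : ℝ)) = x - 1 := by
  have h : (x : AddCircle (1 : ℝ)) = ((x - 1 : ℝ) : AddCircle (1 : ℝ)) := by
    rw [coe_sub, coe_period, sub_zero]
  rw [h, rep_coe ⟨by linarith [hx.1], by linarith [hx.2]⟩]

theorem measurable_rep : Measurable rep :=
  measurable_subtype_coe.comp (measurableEquivIco 1 0).measurable

/-- The circle map which moves each point forward by `h`, evaluated at its representative in
`[0, 1)`. -/
noncomputable def displace (h : ℝ → ℝ) (y : AddCircle (1 : ℝ)) : AddCircle (1 : ℝ) :=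
  ((rep y + h (rep y) : ℝ) : AddCircle (1 : ℝ))

theorem displace_coe {h : ℝ → ℝ} (h01 : h 0 = h 1) {x : ℝ} (hx : x ∈ Set.Icc (0 : ℝ) 1) :
    displace h (x : AddCircle (1 : ℝ)) = ((x + h x : ℝ) : AddCircle (1 : ℝ)) := by
  rcases hx.2.lt_or_eq with h1 | rfl
  · rw [displace, rep_coe ⟨hx.1, h1⟩]
  · have : ((1 : ℝ) : AddCircle (1 : ℝ)) = ((0 : ℝ) : AddCircle (1 : ℝ)) := by
      rw [coe_period, coe_zero]
    rw [this, displace, rep_coe (by simp), h01, coe_add, coe_add, this]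

theorem measurable_displace {h : ℝ → ℝ} (hm : Measurable h) : Measurable (displace h) :=
  (AddCircle.measurable_mk').comp (measurable_rep.add (hm.comp measurable_rep))

/-- An invariant probability measure of a nonnegative displacement map with a fixed point is
carried by the fixed points. -/
theorem ae_displacement_eq_zero_of_invariant {h : ℝ → ℝ} (hm : Measurable h)
    (h0 : ∀ x, 0 ≤ h x) (hmono : StrictMono fun x => x + h x) (h01 : h 0 = h 1) {p : ℝ}
    (hp : p ∈ Set.Ioo (0 : ℝ) 1) (hhp : h p = 0)
    {μ : Measure (AddCircle (1 : ℝ))} [IsProbabilityMeasure μ]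
    (hμ : ∀ A, MeasurableSet A → μ (displace h ⁻¹' A) = μ A) :
    ∀ᵐ y ∂μ, h (rep y) = 0 := by
  let g : ℝ → ℝ := fun x => if p ≤ x then x - 1 else x
  have hg : Measurable g :=
    Measurable.ite measurableSet_Ici (measurable_id.sub_const 1) measurable_id
  have hT := measurable_displace hm
  have hmp : MeasurePreserving (displace h) μ μ :=
    ⟨hT, Measure.ext fun A hA => by rw [Measure.map_apply hT hA, hμ A hA]⟩
  let G : AddCircle (1 : ℝ) → ℝ := fun y => g (rep y)
  have hG : Measurable G := hg.comp measurable_rep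
  have hstep (y) : G (displace h y) = G y + h (rep y) := by
    obtain ⟨hu0, hu1⟩ := rep_mem y
    set u := rep y with hu
    have hd : displace h y = ((u + h u : ℝ) : AddCircle (1 : ℝ)) := rfl
    have hp' : p + h p = p := by rw [hhp, add_zero]
    have hlt1 : u + h u < 1 + h 0 := by rw [h01]; exact hmono hu1
    have h0p : h 0 < p := by have := hmono hp.1; simpa [hhp] using this
    have hhu := h0 u
    simp only [G, g, hd, ← hu]
    by_cases hpu : p ≤ u
    · rw [if_pos hpu]
      by_cases h1 : u + h u < 1
      · rw [rep_coe ⟨by linarith, h1⟩, if_pos (by linarith)]; ring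
      · rw [rep_coe_of_mem_Ico_one_two ⟨not_lt.1 h1, by linarith [hp.2]⟩,
          if_neg (by linarith)]
        ring
    · have h2 : u + h u < p := by
        have := hmono (not_le.1 hpu); simp only [hp'] at this; exact this
      rw [if_neg hpu, rep_coe ⟨by linarith, by linarith [hp.2]⟩, if_neg (by linarith)]
  have hGint : Integrable G μ := by
    refine Integrable.of_bound hG.aestronglyMeasurable 1 (Eventually.of_forall fun y => ?_)
    obtain ⟨hu0, hu1⟩ := rep_mem y
    simp only [G, g]
    rw [Real.norm_eq_abs, abs_le]
    split_ifs <;> constructor <;> linarith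
  have hGT : Integrable (fun y => G (displace h y)) μ := hmp.integrable_comp_of_integrable hGint
  have heq : ∫ y, G (displace h y) ∂μ = ∫ y, G y ∂μ := by
    conv_rhs => rw [← hmp.map_eq]
    rw [integral_map hT.aemeasurable hG.aestronglyMeasurable]
  have hdiff : (fun y => h (rep y)) = fun y => G (displace h y) - G y := by
    funext y; rw [hstep]; ring
  have hint : ∫ y, h (rep y) ∂μ = 0 := by
    rw [hdiff, integral_sub hGT hGint, heq, sub_self]
  have hi : Integrable (fun y => h (rep y)) μ := hdiff ▸ hGT.sub hGint
  exact (integral_eq_zero_iff_of_nonneg (fun y => h0 _) hi).1 hint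

end AddCircle

namespace CircleBumps

theorem exists_measure_circleArc_pos {μ : Measure (AddCircle (1 : ℝ))} [IsProbabilityMeasure μ]
    (h0 : ∀ᵐ y ∂μ, AddCircle.rep y ≠ 0) {N : ℕ} (hN : 2 ≤ N) :
    ∃ j, j + 2 ≤ N ∧ μ (circleArc (j / N) ((j + 2 : ℕ) / N)) ≠ 0 := by
  by_contra! hcon
  have hN0 : (0 : ℝ) < N := by exact_mod_cast (by omega : 0 < N)
  have hnull : ∀ᵐ y ∂μ, ∀ j : ℕ, j + 2 ≤ N → y ∉ circleArc (j / N) ((j + 2 : ℕ) / N) := by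
    rw [ae_all_iff]
    intro j
    by_cases hj : j + 2 ≤ N
    · filter_upwards [measure_eq_zero_iff_ae_notMem.1 (hcon j hj)] with y hy _ using hy
    · exact Eventually.of_forall fun y h => absurd h hj
  have hfalse : ∀ᵐ y ∂μ, False := by
    filter_upwards [h0, hnull] with y hy hn
    obtain ⟨hu0, hu1⟩ := AddCircle.rep_mem y
    have hupos := lt_of_le_of_ne hu0 (Ne.symm hy)
    have hc : 0 < ⌈AddCircle.rep y * N⌉₊ := Nat.ceil_pos.2 (by positivity)
    have hle : ⌈AddCircle.rep y * N⌉₊ ≤ N := Nat.ceil_le.2 (by nlinarith)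
    have hlt := Nat.ceil_lt_add_one (a := AddCircle.rep y * N) (by positivity)
    have hge := Nat.le_ceil (AddCircle.rep y * N)
    set c := ⌈AddCircle.rep y * N⌉₊ with hcdef
    have key : ∀ j : ℕ, j + 2 ≤ N → (j : ℝ) < AddCircle.rep y * N →
        AddCircle.rep y * N < j + 2 → False := fun j hj h1 h2 =>
      hn j hj ⟨AddCircle.rep y, by
        push_cast
        exact ⟨(div_lt_iff₀ hN0).2 h1, (lt_div_iff₀ hN0).2 h2⟩, AddCircle.coe_rep y⟩
    by_cases hcN : c + 1 ≤ N
    · refine key (c - 1) (by omega) ?_ ?_ <;> rw [Nat.cast_sub hc] <;> push_cast <;> linarith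
    · have hcN' : c = N := by omega
      have hu : AddCircle.rep y * N < N := by nlinarith
      have hN' : (c : ℝ) = N := by exact_mod_cast hcN'
      refine key (N - 2) (by omega) ?_ ?_ <;> rw [Nat.cast_sub hN] <;> push_cast <;> linarith
  simp only [ae_iff, not_false_eq_true, Set.ofPred_true, measure_univ, one_ne_zero] at hfalse

theorem displacement_pos_of_center {s j : ℕ} (hc : center s = j + 1) {x : ℝ}
    (hx : x ∈ Set.Ioo ((j : ℝ) / scale s) ((j + 2 : ℕ) / scale s : ℝ)) : 0 < displacement x := by
  have hs : (0 : ℝ) < scale s := by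
    exact_mod_cast (lt_of_lt_of_le (by norm_num) (sixteen_le_scale s) : 0 < scale s)
  refine displacement_pos_of_tent (s := s) ?_
  have h1 := (div_lt_iff₀ hs).1 hx.1
  have h2 := (lt_div_iff₀ hs).1 hx.2
  rw [tent_pos_iff, hc, abs_lt]
  push_cast at h2 ⊢
  constructor <;> linarith

theorem not_isComputableMeasureCircle {μ : Measure (AddCircle (1 : ℝ))}
    [IsProbabilityMeasure μ] (hμ : ∀ᵐ y ∂μ, displacement (AddCircle.rep y) = 0) :
    ¬ IsComputableMeasureCircle μ := by
  rintro ⟨f, hf, hL⟩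
  have h0 : ∀ᵐ y ∂μ, AddCircle.rep y ≠ 0 := by
    filter_upwards [hμ] with y hy h
    rw [h, displacement_zero] at hy
    norm_num at hy
  let arc : ℕ → ℕ → List (ℚ × ℚ) := fun n j =>
    [((j : ℚ) / ((2 ^ (n + 4) - 1) + 1 : ℕ), ((j + 2 : ℕ) : ℚ) / ((2 ^ (n + 4) - 1) + 1 : ℕ))]
  have hscale (n : ℕ) : 2 ^ (n + 4) - 1 + 1 = 2 ^ (n + 4) := Nat.sub_add_cancel Nat.one_le_two_pow
  have harc : Computable₂ arc := by
    have hN : Computable fun p : ℕ × ℕ => 2 ^ (p.1 + 4) - 1 :=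
      (Primrec.pred.comp (Primrec.natPow 2
        (Primrec.nat_add.comp Primrec.fst (Primrec.const 4)))).to_comp
    have hj : Computable fun p : ℕ × ℕ => p.2 + 2 :=
      (Primrec.nat_add.comp Primrec.snd (Primrec.const 2)).to_comp
    exact Computable.list_cons.comp
      ((Rat.computable_natCast_div_succ.comp Computable.snd hN).pair
        (Rat.computable_natCast_div_succ.comp hj hN)) (Computable.const [])
  have hval (n j : ℕ) : Monotone (f (arc n j)) ∧ Tendsto (fun m => (f (arc n j) m : ℝ)) atTop
      (𝓝 (μ (circleArc (j / (2 ^ (n + 4) : ℕ)) ((j + 2 : ℕ) / (2 ^ (n + 4) : ℕ)))).toReal) := by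
    have := hL (arc n j)
    simpa only [arc, hscale, List.mem_singleton, Set.iUnion_iUnion_eq_left] using this
  have hex (n : ℕ) : ∃ w : ℕ, w.unpair.1 + 2 ≤ 2 ^ (n + 4) ∧
      0 < f (arc n w.unpair.1) w.unpair.2 := by
    have h2 : 2 ≤ 2 ^ (n + 4) := by
      have : 1 ≤ 2 ^ n := Nat.one_le_two_pow
      rw [pow_add]; omega
    obtain ⟨j, hj, hjμ⟩ := exists_measure_circleArc_pos h0 h2
    have hpos := ENNReal.toReal_pos hjμ (measure_ne_top _ _)
    obtain ⟨m, hm⟩ := ((hval n j).2.eventually (lt_mem_nhds hpos)).exists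
    refine ⟨Nat.pair j m, ?_⟩
    simp only [Nat.unpair_pair]
    exact ⟨hj, by exact_mod_cast hm⟩
  have hdec : Computable₂ fun n w : ℕ => decide (w.unpair.1 + 2 ≤ 2 ^ (n + 4) ∧
      0 < f (arc n w.unpair.1) w.unpair.2) := by
    have h1 : Computable fun p : ℕ × ℕ => p.2.unpair.1 :=
      (Primrec.fst.comp (Primrec.unpair.comp Primrec.snd)).to_comp
    have h2 : Computable fun p : ℕ × ℕ => p.2.unpair.2 :=
      (Primrec.snd.comp (Primrec.unpair.comp Primrec.snd)).to_comp
    have hle : PrimrecPred fun p : ℕ × ℕ => p.2.unpair.1 + 2 ≤ 2 ^ (p.1 + 4) :=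
      Primrec.nat_le.comp
        (Primrec.nat_add.comp (Primrec.fst.comp (Primrec.unpair.comp Primrec.snd))
          (Primrec.const 2))
        (Primrec.natPow 2 (Primrec.nat_add.comp Primrec.fst (Primrec.const 4)))
    have hpos := Rat.computable_decide_pos.comp
      (hf.comp (harc.comp Computable.fst h1) h2)
    refine (Primrec.and.to_comp.comp hle.decide.to_comp hpos).of_eq fun p => ?_
    exact (Bool.decide_and _ _).symm
  have hg : Computable fun n => (Nat.find (hex n)).unpair.1 :=
    (Primrec.fst.comp Primrec.unpair).to_comp.comp (Computable.natFind hdec hex)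
  obtain ⟨c, hc⟩ := Nat.Partrec.Code.exists_code.1 (Partrec.nat_iff.1 hg.partrec)
  set n := Encodable.encode c with hn
  obtain ⟨hjle, hjpos⟩ := Nat.find_spec (hex n)
  set j := (Nat.find (hex n)).unpair.1 with hj
  have hmem : j ∈ Nat.Partrec.Code.eval c n := by
    rw [hc]; exact Part.mem_some_iff.2 hj
  obtain ⟨k, hk⟩ := Nat.Partrec.Code.evaln_complete.1 hmem
  have hsc : scale (Nat.pair n k) = 2 ^ (n + 4) := by simp [scale]
  have hcenter : center (Nat.pair n k) = j + 1 := by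
    rw [center, hsc]
    simp only [Nat.unpair_pair]
    rw [hn, Denumerable.ofNat_encode, ← hn, Option.mem_def.1 hk, Option.getD_some,
      min_eq_left (by omega)]
  have hmpos : 0 < μ (circleArc (j / (2 ^ (n + 4) : ℕ)) ((j + 2 : ℕ) / (2 ^ (n + 4) : ℕ))) := by
    have h1 := ge_of_tendsto (hval n j).2 (eventually_atTop.2
      ⟨(Nat.find (hex n)).unpair.2, fun m hm => Rat.cast_le.2 ((hval n j).1 hm)⟩)
    have h2 : (0 : ℝ) < f (arc n j) (Nat.find (hex n)).unpair.2 := by exact_mod_cast hjpos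
    exact (ENNReal.toReal_pos_iff.1 (h2.trans_le h1)).1
  refine hmpos.ne' (measure_eq_zero_iff_ae_notMem.2 ?_)
  filter_upwards [hμ] with y hy
  rintro ⟨x, hx, rfl⟩
  push_cast at hx
  have hx01 : x ∈ Set.Ico (0 : ℝ) 1 := by
    have hjle' : ((j : ℝ) + 2) ≤ 2 ^ (n + 4) := by exact_mod_cast hjle
    refine ⟨le_trans (by positivity) hx.1.le, hx.2.trans_le ?_⟩
    rw [div_le_one (by positivity)]; exact hjle'
  rw [AddCircle.rep_coe hx01] at hy
  refine (displacement_pos_of_center hcenter ?_).ne' hy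
  rw [hsc]
  push_cast
  exact hx

theorem strictMono_add_displacement : StrictMono fun x => x + displacement x := fun x y hxy => by
  have h := (abs_le.1 (abs_displacement_sub_le x y)).2
  rw [abs_of_neg (sub_neg.2 hxy)] at h
  show x + displacement x < y + displacement y
  linarith

end CircleBumps

/-- There is a computable, nondecreasing, continuous function `t : [0,1] → ℝ` with
`t 1 = t 0 + 1` such that the induced circle endomorphism `T₁ : ℝ/ℤ → ℝ/ℤ`,
`T₁(x) = t(x) mod ℤ`, has the property that every `T₁`-invariant Borel probability
measure on `ℝ/ℤ` is not computable. -/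
theorem exists_circle_map_all_invariant_measures_noncomputable :
    ∃ t : ℝ → ℝ, IsComputableFunOnUnitInterval t ∧
      MonotoneOn t (Set.Icc 0 1) ∧ ContinuousOn t (Set.Icc 0 1) ∧
      t 1 = t 0 + 1 ∧
      ∃ T : AddCircle (1 : ℝ) → AddCircle (1 : ℝ),
        (∀ x ∈ Set.Icc (0 : ℝ) 1,
          T ((x : ℝ) : AddCircle (1 : ℝ)) = ((t x : ℝ) : AddCircle (1 : ℝ))) ∧
        ∀ μ : Measure (AddCircle (1 : ℝ)), IsProbabilityMeasure μ →
          (∀ A : Set (AddCircle (1 : ℝ)), MeasurableSet A → μ (T ⁻¹' A) = μ A) →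
          ¬ IsComputableMeasureCircle μ := by
  have h01 : CircleBumps.displacement 0 = CircleBumps.displacement 1 := by
    rw [CircleBumps.displacement_zero, CircleBumps.displacement_one]
  obtain ⟨p, hp, hp0⟩ := CircleBumps.exists_displacement_eq_zero
  refine ⟨fun x => x + CircleBumps.displacement x,
    CircleBumps.isComputableFunOnUnitInterval_displacement,
    CircleBumps.strictMono_add_displacement.monotone.monotoneOn _,
    (continuous_id.add CircleBumps.continuous_displacement).continuousOn, ?_,
    AddCircle.displace CircleBumps.displacement,
    fun x hx => AddCircle.displace_coe h01 hx, fun μ _ hμ => ?_⟩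
  · simp only [h01]; ring
  · exact CircleBumps.not_isComputableMeasureCircle
      (AddCircle.ae_displacement_eq_zero_of_invariant
        CircleBumps.continuous_displacement.measurable CircleBumps.displacement_nonneg
        CircleBumps.strictMono_add_displacement h01
        ⟨by linarith [hp.1], by linarith [hp.2]⟩ hp0 hμ)
end
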